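/- Let m, c, k, h, ω be positive reals with 0 < m²·ω⁴ + ((2c + k·h)² − c² − 4k·m)·ω² + 3k², set s = iω, and let z₁, z₂ : ℝ → ℂ. Assume: z₁ and z₂ are twice differentiable with continuous first and second derivatives on [0,∞); z₁, z₁', z₂, z₂', z₂'' are all of exponential order a for some real a with a < 0; z₁(0) = 0, z₂(0) = 0 and z₂'(0) = 0; the differential equation z₂''(t) + ((2c + k·h)/m)·z₂'(t) + (2k/m)·z₂(t) = (c/m)·z₁'(t) + (k/m)·z₁(t) holds for all t ≥ 0; and L[z₁](s) ≠ 0. Then ‖L[z₂](s) / L[z₁](s)‖ < 1, i.e., the platoon with autonomous bidirectional variable-spacing controller is stable at frequency ω. -/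

import Mathlib

open MeasureTheory

/-- The Laplace transform of `f : ℝ → ℂ` at `s : ℂ`:  `∫ t in (0,∞), e^{-s t} f t`. -/
noncomputable def laplace (f : ℝ → ℂ) (s : ℂ) : ℂ :=
  ∫ t in Set.Ioi (0 : ℝ), Complex.exp (-(s * t)) * f t

/-- `f` is of exponential order `a`: there is `M > 0` with `‖f t‖ ≤ M e^{a t}` for `t ≥ 0`. -/
def ExpOrder (f : ℝ → ℂ) (a : ℝ) : Prop :=
  ∃ M > 0, ∀ t ≥ (0 : ℝ), ‖f t‖ ≤ M * Real.exp (a * t)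

/-!
Write the differential equation as `m z₂'' + b z₂' + d z₂ = c z₁' + k z₁` with `b = 2c + kh` and
`d = 2k`. The combination `w = m z₂' + b z₂ - c z₁` vanishes at `0` and has derivative
`k z₁ - d z₂`, so the Laplace transform of a derivative, applied to `w` and to `z₂`, gives
`(m s² + b s + d) L[z₂](s) = (c s + k) L[z₁](s)` without any transform of `z₁'` or `z₂''`.
At `s = iω` the frequency condition says exactly that `‖c s + k‖ < ‖m s² + b s + d‖`.
-/

/-- Absolute convergence of the integral defining `laplace f s`. It is what makes the transform
linear and rules out the value `0` that Lean assigns to a divergent integral. -/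
def LaplaceIntegrable (f : ℝ → ℂ) (s : ℂ) : Prop :=
  IntegrableOn (fun t : ℝ ↦ Complex.exp (-(s * t)) * f t) (Set.Ioi 0)

section Laplace

variable {f g f' : ℝ → ℂ} {s : ℂ}

theorem ExpOrder.laplaceIntegrable {a : ℝ} (hf : ExpOrder f a)
    (hcont : ContinuousOn f (Set.Ici 0)) (has : a < s.re) : LaplaceIntegrable f s := by
  obtain ⟨M, -, hM⟩ := hf
  have hdom : IntegrableOn (fun t : ℝ ↦ M * Real.exp ((a - s.re) * t)) (Set.Ioi 0) :=
    (integrableOn_exp_mul_Ioi (sub_neg.2 has) 0).const_mul M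
  refine Integrable.mono' hdom ?_ (ae_restrict_of_forall_mem measurableSet_Ioi fun t ht ↦ ?_)
  · exact ((by fun_prop : Continuous fun t : ℝ ↦ Complex.exp (-(s * t))).continuousOn.mul
      (hcont.mono Set.Ioi_subset_Ici_self)).aestronglyMeasurable measurableSet_Ioi
  · calc ‖Complex.exp (-(s * t)) * f t‖
        = Real.exp (-(s.re * t)) * ‖f t‖ := by simp [Complex.norm_exp]
      _ ≤ Real.exp (-(s.re * t)) * (M * Real.exp (a * t)) := by gcongr; exact hM t (le_of_lt ht)
      _ = M * Real.exp ((a - s.re) * t) := by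
        rw [mul_left_comm, ← Real.exp_add]
        ring_nf

theorem LaplaceIntegrable.add (hf : LaplaceIntegrable f s) (hg : LaplaceIntegrable g s) :
    LaplaceIntegrable (fun t ↦ f t + g t) s := by
  simp only [LaplaceIntegrable, mul_add]
  exact Integrable.add hf hg

theorem LaplaceIntegrable.sub (hf : LaplaceIntegrable f s) (hg : LaplaceIntegrable g s) :
    LaplaceIntegrable (fun t ↦ f t - g t) s := by
  simp only [LaplaceIntegrable, mul_sub]
  exact Integrable.sub hf hg

theorem LaplaceIntegrable.const_mul (hf : LaplaceIntegrable f s) (c : ℂ) :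
    LaplaceIntegrable (fun t ↦ c * f t) s := by
  simpa only [LaplaceIntegrable, IntegrableOn, mul_left_comm] using Integrable.const_mul hf c

theorem laplace_add (hf : LaplaceIntegrable f s) (hg : LaplaceIntegrable g s) :
    laplace (fun t ↦ f t + g t) s = laplace f s + laplace g s := by
  simpa only [laplace, mul_add] using integral_add hf hg

theorem laplace_sub (hf : LaplaceIntegrable f s) (hg : LaplaceIntegrable g s) :
    laplace (fun t ↦ f t - g t) s = laplace f s - laplace g s := by
  simpa only [laplace, mul_sub] using integral_sub hf hg

theorem laplace_const_mul (f : ℝ → ℂ) (s c : ℂ) :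
    laplace (fun t ↦ c * f t) s = c * laplace f s := by
  simp only [laplace, mul_left_comm _ c, integral_const_mul]

theorem hasDerivAt_exp_neg_mul_mul {z : ℂ} {t : ℝ} (hf : HasDerivAt f z t) (s : ℂ) :
    HasDerivAt (fun t : ℝ ↦ Complex.exp (-(s * t)) * f t)
      (Complex.exp (-(s * t)) * (z - s * f t)) t := by
  have hlin : HasDerivAt (fun t : ℝ ↦ -(s * (t : ℂ))) (-(s * 1)) t :=
    ((hasDerivAt_id t).ofReal_comp.const_mul s).neg
  exact (hlin.cexp.mul hf).congr_deriv (by ring)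

theorem laplace_deriv (hderiv : ∀ t ∈ Set.Ici (0 : ℝ), HasDerivWithinAt f (f' t) (Set.Ici 0) t)
    (hf : LaplaceIntegrable f s) (hf' : LaplaceIntegrable f' s) :
    laplace f' s = s * laplace f s - f 0 := by
  have hint : LaplaceIntegrable (fun t ↦ f' t - s * f t) s := hf'.sub (hf.const_mul s)
  have hweighted (t : ℝ) (ht : t ∈ Set.Ioi 0) :=
    hasDerivAt_exp_neg_mul_mul ((hderiv t (le_of_lt ht)).hasDerivAt (Ici_mem_nhds ht)) s
  have hcont : ContinuousWithinAt (fun t : ℝ ↦ Complex.exp (-(s * t)) * f t) (Set.Ici 0) 0 :=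
    (by fun_prop : Continuous fun t : ℝ ↦ Complex.exp (-(s * t))).continuousWithinAt.mul
      (hderiv 0 Set.self_mem_Ici).continuousWithinAt
  have hlim := tendsto_zero_of_hasDerivAt_of_integrableOn_Ioi hweighted hint hf
  have hFTC : laplace (fun t ↦ f' t - s * f t) s = -f 0 := by
    simpa [laplace] using integral_Ioi_of_hasDerivAt_of_tendsto hcont hweighted hint hlim
  rw [laplace_sub hf' (hf.const_mul s), laplace_const_mul] at hFTC
  linear_combination hFTC

end Laplace

theorem laplace_transfer_of_second_order_ode {m b d c k s : ℂ} {y y' y'' x x' : ℝ → ℂ}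
    (hy : ∀ t ∈ Set.Ici (0 : ℝ), HasDerivWithinAt y (y' t) (Set.Ici 0) t)
    (hy' : ∀ t ∈ Set.Ici (0 : ℝ), HasDerivWithinAt y' (y'' t) (Set.Ici 0) t)
    (hx : ∀ t ∈ Set.Ici (0 : ℝ), HasDerivWithinAt x (x' t) (Set.Ici 0) t)
    (hyint : LaplaceIntegrable y s) (hy'int : LaplaceIntegrable y' s)
    (hxint : LaplaceIntegrable x s) (hy0 : y 0 = 0) (hy'0 : m * y' 0 = c * x 0)
    (hode : ∀ t ≥ (0 : ℝ), m * y'' t + b * y' t + d * y t = c * x' t + k * x t) :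
    (m * s ^ 2 + b * s + d) * laplace y s = (c * s + k) * laplace x s := by
  have hw (t : ℝ) (ht : t ∈ Set.Ici 0) :
      HasDerivWithinAt (fun t ↦ m * y' t + b * y t - c * x t) (k * x t - d * y t)
        (Set.Ici 0) t :=
    ((((hy' t ht).const_mul m).add ((hy t ht).const_mul b)).sub
      ((hx t ht).const_mul c)).congr_deriv (by linear_combination hode t ht)
  have hLw := laplace_deriv hw
    (((hy'int.const_mul m).add (hyint.const_mul b)).sub (hxint.const_mul c))
    ((hxint.const_mul k).sub (hyint.const_mul d))
  have hLy := laplace_deriv hy hyint hy'int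
  rw [laplace_sub (hxint.const_mul k) (hyint.const_mul d),
    laplace_sub ((hy'int.const_mul m).add (hyint.const_mul b)) (hxint.const_mul c),
    laplace_add (hy'int.const_mul m) (hyint.const_mul b)] at hLw
  simp only [laplace_const_mul] at hLw
  linear_combination -hLw - s * m * hLy + (s * m + b) * hy0 + hy'0

theorem norm_linear_lt_norm_quadratic_I_mul_iff (m b d c k ω : ℝ) :
    ‖(c : ℂ) * (Complex.I * ω) + k‖
        < ‖(m : ℂ) * (Complex.I * ω) ^ 2 + b * (Complex.I * ω) + d‖ ↔
      k ^ 2 + (c * ω) ^ 2 < (d - m * ω ^ 2) ^ 2 + (b * ω) ^ 2 := by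
  have hlinear : (c : ℂ) * (Complex.I * ω) + k = (k : ℝ) + (c * ω : ℝ) * Complex.I := by
    push_cast
    ring
  have hquadratic : (m : ℂ) * (Complex.I * ω) ^ 2 + b * (Complex.I * ω) + d
      = (d - m * ω ^ 2 : ℝ) + (b * ω : ℝ) * Complex.I := by
    push_cast
    linear_combination (m : ℂ) * ω ^ 2 * Complex.I_sq
  rw [hlinear, hquadratic, Complex.norm_add_mul_I, Complex.norm_add_mul_I,
    Real.sqrt_lt_sqrt_iff (by positivity)]

theorem norm_div_lt_one_of_mul_eq_mul {𝕜 : Type*} [NormedField 𝕜] {p q x y : 𝕜}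
    (hxy : p * y = q * x) (hqp : ‖q‖ < ‖p‖) (hx : x ≠ 0) : ‖y / x‖ < 1 := by
  have hp : 0 < ‖p‖ := (norm_nonneg q).trans_lt hqp
  have hquot : y / x = q / p := by
    rw [div_eq_div_iff hx (norm_pos_iff.1 hp), mul_comm, hxy]
  rwa [hquot, norm_div, div_lt_one hp]

theorem stmt13_general {m c k h ω : ℝ} (hm : m ≠ 0)
    (hfreq : 0 < m ^ 2 * ω ^ 4 + ((2 * c + k * h) ^ 2 - c ^ 2 - 4 * k * m) * ω ^ 2 + 3 * k ^ 2)
    {z₁ z₂ z₁' z₂' z₂'' : ℝ → ℂ}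
    (hdz₁ : ∀ t ∈ Set.Ici (0 : ℝ), HasDerivWithinAt z₁ (z₁' t) (Set.Ici 0) t)
    (hdz₂ : ∀ t ∈ Set.Ici (0 : ℝ), HasDerivWithinAt z₂ (z₂' t) (Set.Ici 0) t)
    (hdz₂' : ∀ t ∈ Set.Ici (0 : ℝ), HasDerivWithinAt z₂' (z₂'' t) (Set.Ici 0) t)
    (hz₁ : LaplaceIntegrable z₁ (Complex.I * ω)) (hz₂ : LaplaceIntegrable z₂ (Complex.I * ω))
    (hz₂' : LaplaceIntegrable z₂' (Complex.I * ω))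
    (hinit₂ : z₂ 0 = 0) (hinit₂' : m * z₂' 0 = c * z₁ 0)
    (hode : ∀ t ≥ (0 : ℝ),
      z₂'' t + (((2 * c + k * h) / m : ℝ) : ℂ) * z₂' t + ((2 * k / m : ℝ) : ℂ) * z₂ t
        = ((c / m : ℝ) : ℂ) * z₁' t + ((k / m : ℝ) : ℂ) * z₁ t)
    (hL : laplace z₁ (Complex.I * ω) ≠ 0) :
    ‖laplace z₂ (Complex.I * ω) / laplace z₁ (Complex.I * ω)‖ < 1 := by
  have hode_cleared (t : ℝ) (ht : t ≥ 0) :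
      (m : ℂ) * z₂'' t + (2 * c + k * h : ℝ) * z₂' t + (2 * k : ℝ) * z₂ t
        = c * z₁' t + k * z₁ t := by
    have hmℂ : (m : ℂ) ≠ 0 := Complex.ofReal_ne_zero.2 hm
    have hode_t := hode t ht
    push_cast at hode_t ⊢
    field_simp at hode_t
    linear_combination hode_t
  refine norm_div_lt_one_of_mul_eq_mul (laplace_transfer_of_second_order_ode hdz₂ hdz₂' hdz₁
    hz₂ hz₂' hz₁ hinit₂ hinit₂' hode_cleared) ?_ hL
  rw [norm_linear_lt_norm_quadratic_I_mul_iff]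
  linarith

theorem stmt13 (m c k h ω : ℝ) (hm : 0 < m) (hc : 0 < c) (hk : 0 < k) (hh : 0 < h) (hω : 0 < ω)
    (hfreq : 0 < m ^ 2 * ω ^ 4 + ((2 * c + k * h) ^ 2 - c ^ 2 - 4 * k * m) * ω ^ 2 + 3 * k ^ 2)
    (s : ℂ) (hs : s = Complex.I * (ω : ℂ)) (a : ℝ) (ha : a < 0)
    (z₁ z₂ z₁' z₁'' z₂' z₂'' : ℝ → ℂ)
    (hdz₁ : ∀ t ∈ Set.Ici (0 : ℝ), HasDerivWithinAt z₁ (z₁' t) (Set.Ici 0) t)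
    (hdz₁' : ∀ t ∈ Set.Ici (0 : ℝ), HasDerivWithinAt z₁' (z₁'' t) (Set.Ici 0) t)
    (hdz₂ : ∀ t ∈ Set.Ici (0 : ℝ), HasDerivWithinAt z₂ (z₂' t) (Set.Ici 0) t)
    (hdz₂' : ∀ t ∈ Set.Ici (0 : ℝ), HasDerivWithinAt z₂' (z₂'' t) (Set.Ici 0) t)
    (hcz₁' : ContinuousOn z₁' (Set.Ici 0)) (hcz₁'' : ContinuousOn z₁'' (Set.Ici 0))
    (hcz₂' : ContinuousOn z₂' (Set.Ici 0)) (hcz₂'' : ContinuousOn z₂'' (Set.Ici 0))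
    (hez₁ : ExpOrder z₁ a) (hez₁' : ExpOrder z₁' a)
    (hez₂ : ExpOrder z₂ a) (hez₂' : ExpOrder z₂' a) (hez₂'' : ExpOrder z₂'' a)
    (hinit₁ : z₁ 0 = 0) (hinit₂ : z₂ 0 = 0) (hinit₂' : z₂' 0 = 0)
    (hode : ∀ t ≥ (0 : ℝ),
      z₂'' t + (((2 * c + k * h) / m : ℝ) : ℂ) * z₂' t + ((2 * k / m : ℝ) : ℂ) * z₂ t
        = ((c / m : ℝ) : ℂ) * z₁' t + ((k / m : ℝ) : ℂ) * z₁ t)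
    (hL : laplace z₁ s ≠ 0) :
    ‖laplace z₂ s / laplace z₁ s‖ < 1 := by
  subst hs
  have hre : a < (Complex.I * (ω : ℂ)).re := by simpa using ha
  have hcz₁ : ContinuousOn z₁ (Set.Ici 0) := HasDerivWithinAt.continuousOn hdz₁
  have hcz₂ : ContinuousOn z₂ (Set.Ici 0) := HasDerivWithinAt.continuousOn hdz₂
  exact stmt13_general hm.ne' hfreq hdz₁ hdz₂ hdz₂' (hez₁.laplaceIntegrable hcz₁ hre)
    (hez₂.laplaceIntegrable hcz₂ hre) (hez₂'.laplaceIntegrable hcz₂' hre)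
    hinit₂ (by rw [hinit₁, hinit₂', mul_zero, mul_zero]) hode hL
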